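/- Let 0 ≠ μ ∈ V_n and suppose M_μ = c·I + D for some c ∈ ℝ and some D ∈ Der(μ) (so [μ] is a critical point of the square norm of the moment map). Then c = tr(M_μ²)/tr(M_μ) = −tr(M_μ²)/(2‖μ‖²), and in particular c < 0. -/

import Mathlib

/-!
The proof rests on the moment map identity `tr(M_μ A) = 2⟨μ, A.μ⟩`, valid for every endomorphism
`A` (`trace_Mmap_comp`). For `A = D` a derivation it gives `tr(M_μ D) = 0`, and for `A = I`, where
`I.μ = -μ`, it gives `tr M_μ = -2‖μ‖²` (`trace_Mmap`), which is nonzero. Multiplying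
`M_μ = c I + D` by `M_μ` and taking traces yields `tr(M_μ²) = c tr M_μ`, hence both formulas
for `c`. Since `M_μ` is Hermitian with nonzero trace, `tr(M_μ²) > 0` (`trace_Mmap_sq`), so `c < 0`.
-/

open scoped InnerProductSpace ComplexOrder
open LinearMap

noncomputable section

abbrev E (n : ℕ) := EuclideanSpace ℂ (Fin n)

abbrev Vb (n : ℕ) := E n →ₗ[ℂ] E n →ₗ[ℂ] E n

def e (n : ℕ) (i : Fin n) : E n := EuclideanSpace.single i 1

def Lop {n : ℕ} (μ : Vb n) (X : E n) : E n →ₗ[ℂ] E n := μ X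

def Rop {n : ℕ} (μ : Vb n) (X : E n) : E n →ₗ[ℂ] E n := μ.flip X

def Mmap {n : ℕ} (μ : Vb n) : E n →ₗ[ℂ] E n :=
  (2 : ℂ) • ∑ i, Lop μ (e n i) ∘ₗ adjoint (Lop μ (e n i))
  - (2 : ℂ) • ∑ i, adjoint (Lop μ (e n i)) ∘ₗ Lop μ (e n i)
  - (2 : ℂ) • ∑ i, adjoint (Rop μ (e n i)) ∘ₗ Rop μ (e n i)

/-- `A` is a derivation of `μ`. -/
def IsDer {n : ℕ} (μ : Vb n) (A : E n →ₗ[ℂ] E n) : Prop :=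
  ∀ X Y, A (μ X Y) = μ (A X) Y + μ X (A Y)

def normSq {n : ℕ} (μ : Vb n) : ℝ :=
  ∑ i, ∑ j, ∑ k, ‖(⟪e n k, μ (e n i) (e n j)⟫_ℂ : ℂ)‖ ^ 2

/-- Trace of an endomorphism in the standard orthonormal basis. -/
theorem trace_eq_sum_e {n : ℕ} (T : E n →ₗ[ℂ] E n) :
    LinearMap.trace ℂ (E n) T = ∑ i, ⟪e n i, T (e n i)⟫_ℂ := by
  simpa [e] using LinearMap.trace_eq_sum_inner T (EuclideanSpace.basisFun (Fin n) ℂ)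

/-- The moment map identity `tr(M_μ A) = 2⟨μ, A.μ⟩`: pairing `M_μ` with an endomorphism `A` is the
pairing of `μ` with the infinitesimal action of `A` on it. -/
theorem trace_Mmap_comp {n : ℕ} (μ : Vb n) (A : E n →ₗ[ℂ] E n) :
    LinearMap.trace ℂ (E n) (Mmap μ ∘ₗ A) =
      2 * ∑ i, ∑ j, ⟪μ (e n i) (e n j),
        A (μ (e n i) (e n j)) - μ (A (e n i)) (e n j) - μ (e n i) (A (e n j))⟫_ℂ := by
  have h1 : ∀ i, LinearMap.trace ℂ (E n) ((Lop μ (e n i) ∘ₗ adjoint (Lop μ (e n i))) ∘ₗ A) =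
      ∑ j, ⟪μ (e n i) (e n j), A (μ (e n i) (e n j))⟫_ℂ := by
    intro i
    rw [LinearMap.comp_assoc, LinearMap.trace_comp_comm', trace_eq_sum_e]
    simp [LinearMap.adjoint_inner_right, Lop]
  have h2 : ∀ i, LinearMap.trace ℂ (E n) ((adjoint (Lop μ (e n i)) ∘ₗ Lop μ (e n i)) ∘ₗ A) =
      ∑ j, ⟪μ (e n i) (e n j), μ (e n i) (A (e n j))⟫_ℂ := by
    intro i
    rw [trace_eq_sum_e]
    simp [LinearMap.adjoint_inner_right, Lop]
  have h3 : ∀ i, LinearMap.trace ℂ (E n) ((adjoint (Rop μ (e n i)) ∘ₗ Rop μ (e n i)) ∘ₗ A) =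
      ∑ j, ⟪μ (e n j) (e n i), μ (A (e n j)) (e n i)⟫_ℂ := by
    intro i
    rw [trace_eq_sum_e]
    simp [LinearMap.adjoint_inner_right, Rop]
  have hsum : ∀ f : Fin n → (E n →ₗ[ℂ] E n), (∑ i, f i) ∘ₗ A = ∑ i, f i ∘ₗ A := fun f =>
    LinearMap.ext fun x => by simp [LinearMap.sum_apply]
  simp only [Mmap, LinearMap.sub_comp, LinearMap.smul_comp, hsum, map_sub, map_smul,
    map_sum, h1, h2, h3, inner_sub_right, Finset.sum_sub_distrib, smul_eq_mul]
  rw [Finset.sum_comm (f := fun i j => ⟪μ (e n j) (e n i), μ (A (e n j)) (e n i)⟫_ℂ)]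
  ring

theorem adjoint_Mmap {n : ℕ} (μ : Vb n) : adjoint (Mmap μ) = Mmap μ := by
  have h2 : (starRingEnd ℂ) 2 = 2 := Complex.conj_ofNat 2
  simp [Mmap, LinearMap.adjoint_comp, map_smulₛₗ, h2]

theorem normSq_eq {n : ℕ} (μ : Vb n) :
    normSq μ = ∑ i, ∑ j, ‖μ (e n i) (e n j)‖ ^ 2 := by
  unfold normSq
  refine Finset.sum_congr rfl fun i _ => Finset.sum_congr rfl fun j _ => ?_
  simpa [e] using (EuclideanSpace.basisFun (Fin n) ℂ).sum_sq_norm_inner_right (μ (e n i) (e n j))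

theorem normSq_ne_zero {n : ℕ} (μ : Vb n) (hμ : μ ≠ 0) : normSq μ ≠ 0 := by
  intro h
  apply hμ
  rw [normSq_eq, Finset.sum_eq_zero_iff_of_nonneg (fun _ _ => by positivity)] at h
  refine (EuclideanSpace.basisFun (Fin n) ℂ).toBasis.ext fun i =>
    (EuclideanSpace.basisFun (Fin n) ℂ).toBasis.ext fun j => ?_
  have hi := h i (Finset.mem_univ _)
  rw [Finset.sum_eq_zero_iff_of_nonneg (fun _ _ => by positivity)] at hi
  simpa [e] using hi j (Finset.mem_univ _)

theorem normSq_pos {n : ℕ} (μ : Vb n) (hμ : μ ≠ 0) : 0 < normSq μ :=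
  lt_of_le_of_ne (by rw [normSq_eq]; positivity) (normSq_ne_zero μ hμ).symm

theorem trace_Mmap {n : ℕ} (μ : Vb n) :
    LinearMap.trace ℂ (E n) (Mmap μ) = -((2 * normSq μ : ℝ) : ℂ) := by
  have h := trace_Mmap_comp μ LinearMap.id
  simp only [LinearMap.comp_id, LinearMap.id_apply, sub_self, zero_sub, inner_neg_right,
    inner_self_eq_norm_sq_to_K, Finset.sum_neg_distrib] at h
  rw [h, normSq_eq]
  push_cast
  simp

/-- `tr(M_μ²)` is the squared Hilbert–Schmidt norm of `M_μ`, since `M_μ` is Hermitian. -/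
theorem trace_Mmap_sq {n : ℕ} (μ : Vb n) :
    LinearMap.trace ℂ (E n) (Mmap μ ∘ₗ Mmap μ) =
      ((∑ i, ‖Mmap μ (e n i)‖ ^ 2 : ℝ) : ℂ) := by
  rw [trace_eq_sum_e]
  push_cast
  refine Finset.sum_congr rfl fun i _ => ?_
  rw [Function.comp_apply]
  nth_rewrite 1 [← adjoint_Mmap μ]
  rw [LinearMap.adjoint_inner_right, inner_self_eq_norm_sq_to_K]
  rfl

/-- If `0 ≠ μ ∈ V_n` and `M_μ = c·I + D` with `c ∈ ℝ`, `D ∈ Der(μ)`, then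
`c = tr(M_μ²)/tr(M_μ) = −tr(M_μ²)/(2‖μ‖²) < 0`. -/
theorem critical_c_value {n : ℕ} (μ : Vb n) (hμ : μ ≠ 0)
    (c : ℝ) (D : E n →ₗ[ℂ] E n) (hDer : IsDer μ D)
    (hM : Mmap μ = (c : ℂ) • (LinearMap.id : E n →ₗ[ℂ] E n) + D) :
    (c : ℂ) = LinearMap.trace ℂ (E n) (Mmap μ ∘ₗ Mmap μ)
        / LinearMap.trace ℂ (E n) (Mmap μ) ∧
    (c : ℂ) = -(LinearMap.trace ℂ (E n) (Mmap μ ∘ₗ Mmap μ))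
        / ((2 * normSq μ : ℝ) : ℂ) ∧
    c < 0 := by
  have hN := normSq_pos μ hμ
  have htr := trace_Mmap μ
  have hD : LinearMap.trace ℂ (E n) (Mmap μ ∘ₗ D) = 0 := by
    rw [trace_Mmap_comp]
    simp [hDer _ _]
  have hsq : LinearMap.trace ℂ (E n) (Mmap μ ∘ₗ Mmap μ) =
      c * LinearMap.trace ℂ (E n) (Mmap μ) := by
    nth_rewrite 2 [hM]
    rw [LinearMap.comp_add, LinearMap.comp_smul, LinearMap.comp_id, map_add, hD, map_smul]
    simp
  have hN' : ((2 * normSq μ : ℝ) : ℂ) ≠ 0 := by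
    exact_mod_cast (by positivity : 2 * normSq μ ≠ 0)
  refine ⟨?_, ?_, ?_⟩
  · rw [hsq, mul_div_cancel_right₀]
    rw [htr]
    exact neg_ne_zero.mpr hN'
  · rw [hsq, htr]
    field_simp
  · have hreal : ∑ i, ‖Mmap μ (e n i)‖ ^ 2 = -(c * (2 * normSq μ)) := by
      have h := trace_Mmap_sq μ
      rw [hsq, htr] at h
      apply Complex.ofReal_injective
      rw [← h]
      push_cast
      ring
    have hnn : 0 ≤ ∑ i, ‖Mmap μ (e n i)‖ ^ 2 := by positivity
    -- `c = 0` would force `M_μ` to vanish on the basis, contradicting `tr M_μ = -2‖μ‖² ≠ 0`.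
    have hc : c ≠ 0 := by
      rintro rfl
      rw [zero_mul, neg_zero, Finset.sum_eq_zero_iff_of_nonneg (fun _ _ => by positivity)] at hreal
      apply hN'
      rw [← neg_eq_zero, ← htr, trace_eq_sum_e]
      refine Finset.sum_eq_zero fun i hi => ?_
      have : Mmap μ (e n i) = 0 := by simpa using hreal i hi
      rw [this, inner_zero_right]
    rcases lt_or_gt_of_ne hc with h | h
    · exact h
    · have := mul_pos h hN
      linarith
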